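/- Let Γ be a group and let φ₁, φ₂ : Γ → GL_n(ℂ) be group homomorphisms whose associated representations of Γ on ℂⁿ are semisimple (ℂⁿ is a semisimple ℂ[Γ]-module under each action). If φ₁(γ) and φ₂(γ) are conjugate in GL_n(ℂ) for every γ ∈ Γ, then there exists g ∈ GL_n(ℂ) with φ₂(γ) = g φ₁(γ) g⁻¹ for all γ ∈ Γ. -/

import Mathlib

noncomputable section

/-- The representation of `Γ` on `ℂⁿ = Fin n → ℂ` associated to a homomorphism of `Γ` into
the multiplicative monoid of `n × n` complex matrices (matrices acting by `Matrix.toLin'`). -/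
def matRep {n : ℕ} {Γ : Type} [Group Γ] (φ : Γ →* Matrix (Fin n) (Fin n) ℂ) :
    Representation ℂ Γ (Fin n → ℂ) :=
  (Matrix.toLinAlgEquiv' : Matrix (Fin n) (Fin n) ℂ ≃ₐ[ℂ] _).toAlgHom.toRingHom.toMonoidHom.comp φ

/-!
Conjugate matrices have the same trace, so by linearity every element of the group algebra has the
same trace on both modules. If no nonzero homomorphism connects two semisimple modules `M` and `N`,
then the projection of `M × N` onto `M` is a central endomorphism, so by Jacobson density some
element of the algebra acts as `1` on `M` and as `0` on `N`; comparing its traces in characteristic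
zero gives `dim M = 0`. Otherwise the image of a nonzero `M → N` is, up to isomorphism, a nonzero
common direct summand of `M` and `N`, and one cancels it and inducts on the dimension.
-/

section SemisimpleModules

variable {A M N : Type*} [Ring A] [AddCommGroup M] [Module A M] [AddCommGroup N] [Module A N]

theorem isSemisimpleModule_prod [IsSemisimpleModule A M] [IsSemisimpleModule A N] :
    IsSemisimpleModule A (M × N) := by
  rw [← Submodule.topEquiv.isSemisimpleModule_iff, ← LinearMap.sup_range_inl_inr]
  exact .sup (.range _) (.range _)

theorem exists_linearMap_comp_comp_eq_self [IsSemisimpleModule A M] [IsSemisimpleModule A N]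
    (f : M →ₗ[A] N) : ∃ g : N →ₗ[A] M, f ∘ₗ g ∘ₗ f = f := by
  obtain ⟨s, hs⟩ := IsSemisimpleModule.lifting_property f.rangeRestrict f.surjective_rangeRestrict
    LinearMap.id
  obtain ⟨g, hg⟩ := IsSemisimpleModule.extension_property f.range.subtype
    f.range.subtype_injective s
  refine ⟨g, LinearMap.ext fun x => ?_⟩
  have hgf : g (f x) = s (f.rangeRestrict x) := LinearMap.congr_fun hg (f.rangeRestrict x)
  have hsf : f.rangeRestrict (s (f.rangeRestrict x)) = f.rangeRestrict x :=
    LinearMap.congr_fun hs (f.rangeRestrict x)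
  rw [LinearMap.comp_apply, LinearMap.comp_apply, hgf]
  exact congrArg Subtype.val hsf

theorem subsingleton_linearMap_symm [IsSemisimpleModule A M] [IsSemisimpleModule A N]
    [Subsingleton (M →ₗ[A] N)] : Subsingleton (N →ₗ[A] M) := by
  refine subsingleton_of_forall_eq 0 fun f => ?_
  obtain ⟨g, hg⟩ := exists_linearMap_comp_comp_eq_self f
  rw [← hg, Subsingleton.elim g 0, LinearMap.zero_comp, LinearMap.comp_zero]

theorem nonempty_linearEquiv_ker_prod_range [IsSemisimpleModule A M] (f : M →ₗ[A] N) :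
    Nonempty (M ≃ₗ[A] f.ker × f.range) := by
  obtain ⟨C, hC⟩ := exists_isCompl f.ker
  exact ⟨(Submodule.prodEquivOfIsCompl f.ker C hC).symm.trans
    ((LinearEquiv.refl A f.ker).prodCongr (f.kerComplementEquivRange hC.symm))⟩

theorem exists_eq_smul_of_mem_center [IsSemisimpleModule A M] [Module.Finite (Module.End A M) M]
    {e : Module.End A M} (he : e ∈ Subring.center (Module.End A M)) :
    ∃ a : A, ∀ x, e x = a • x := by
  let F : Module.End (Module.End A M) M :=
    { e.toAddMonoidHom with
      map_smul' := fun g x => LinearMap.congr_fun (Subring.mem_center_iff.mp he g).symm x }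
  obtain ⟨a, ha⟩ := Module.Finite.toModuleEnd_moduleEnd_surjective F
  exact ⟨a, fun x => (LinearMap.congr_fun ha x).symm⟩

theorem inl_comp_fst_mem_center [Subsingleton (M →ₗ[A] N)] [Subsingleton (N →ₗ[A] M)] :
    LinearMap.inl A M N ∘ₗ LinearMap.fst A M N ∈ Subring.center (Module.End A (M × N)) := by
  refine Subring.mem_center_iff.mpr fun g => ?_
  have hMN : LinearMap.snd A M N ∘ₗ g ∘ₗ LinearMap.inl A M N = 0 := Subsingleton.elim _ _
  have hNM : LinearMap.fst A M N ∘ₗ g ∘ₗ LinearMap.inr A M N = 0 := Subsingleton.elim _ _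
  ext x
  · rfl
  · exact LinearMap.congr_fun hMN x
  · simpa [Prod.mk_zero_zero] using (LinearMap.congr_fun hNM x).symm
  · simp [Prod.mk_zero_zero]

end SemisimpleModules

section ModulesOverAlgebras

variable {k A M N : Type*} [CommRing k] [Ring A] [Algebra k A]
  [AddCommGroup M] [Module k M] [Module A M] [IsScalarTower k A M]
  [AddCommGroup N] [Module k N] [Module A N] [IsScalarTower k A N]

theorem finite_submodule [IsNoetherian k M] (K : Submodule A M) : Module.Finite k K :=
  .of_injective (K.subtype.restrictScalars k) K.subtype_injective

variable (k) in
theorem exists_smul_eq_self_and_smul_eq_zero [Module.Finite k M] [Module.Finite k N]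
    [IsSemisimpleModule A M] [IsSemisimpleModule A N] [Subsingleton (M →ₗ[A] N)] :
    ∃ a : A, (∀ x : M, a • x = x) ∧ ∀ y : N, a • y = 0 := by
  have : IsSemisimpleModule A (M × N) := isSemisimpleModule_prod
  have : Subsingleton (N →ₗ[A] M) := subsingleton_linearMap_symm
  have : Module.Finite (Module.End A (M × N)) (M × N) := .of_restrictScalars_finite k _ _
  obtain ⟨a, ha⟩ := exists_eq_smul_of_mem_center
    (inl_comp_fst_mem_center (A := A) (M := M) (N := N))
  exact ⟨a, fun x => congrArg Prod.fst (ha (x, 0)).symm,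
    fun y => congrArg Prod.snd (ha (0, y)).symm⟩

variable (k A M) in
/-- The character of an `A`-module `M` over a `k`-algebra `A`: the linear functional sending `a` to
the trace of multiplication by `a` on `M`. It takes the junk value `0` if `M` has no finite
`k`-basis. -/
def moduleCharacter : A →ₗ[k] k :=
  LinearMap.trace k M ∘ₗ (Algebra.lsmul k k M).toLinearMap

theorem moduleCharacter_apply (a : A) :
    moduleCharacter k A M a = LinearMap.trace k M (Algebra.lsmul k k M a) :=
  rfl

theorem moduleCharacter_eq_of_linearEquiv (e : M ≃ₗ[A] N) :
    moduleCharacter k A M = moduleCharacter k A N := by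
  ext a
  have hconj : (e.restrictScalars k).conj (Algebra.lsmul k k M a) = Algebra.lsmul k k N a := by
    ext y
    simp [LinearEquiv.conj_apply]
  rw [moduleCharacter_apply, moduleCharacter_apply, ← hconj, LinearMap.trace_conj']

theorem moduleCharacter_prod [Module.Free k M] [Module.Finite k M] [Module.Free k N]
    [Module.Finite k N] :
    moduleCharacter k A (M × N) = moduleCharacter k A M + moduleCharacter k A N := by
  ext a
  exact LinearMap.trace_prodMap' (Algebra.lsmul k k M a) (Algebra.lsmul k k N a)

end ModulesOverAlgebras

section CharacterDeterminesModule

variable {k A M N : Type*} [Field k] [CharZero k] [Ring A] [Algebra k A]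
  [AddCommGroup M] [Module k M] [Module A M] [IsScalarTower k A M] [Module.Finite k M]
  [AddCommGroup N] [Module k N] [Module A N] [IsScalarTower k A N] [Module.Finite k N]

theorem subsingleton_of_moduleCharacter_eq [IsSemisimpleModule A M] [IsSemisimpleModule A N]
    [Subsingleton (M →ₗ[A] N)]
    (h : moduleCharacter k A M = moduleCharacter k A N) : Subsingleton M := by
  obtain ⟨a, haM, haN⟩ := exists_smul_eq_self_and_smul_eq_zero k (A := A) (M := M) (N := N)
  have hM : Algebra.lsmul k k M a = LinearMap.id := LinearMap.ext haM
  have hN : Algebra.lsmul k k N a = 0 := LinearMap.ext haN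
  have htrace := LinearMap.congr_fun h a
  rw [moduleCharacter_apply, moduleCharacter_apply, hM, hN, LinearMap.trace_id, map_zero,
    Nat.cast_eq_zero] at htrace
  exact Module.finrank_zero_iff.mp htrace

theorem nonempty_linearEquiv_of_moduleCharacter_eq
    [IsSemisimpleModule A M] [IsSemisimpleModule A N]
    (h : moduleCharacter k A M = moduleCharacter k A N) : Nonempty (M ≃ₗ[A] N) := by
  induction hd : Module.finrank k M using Nat.strong_induction_on generalizing M N with
  | h d ih =>
    rcases subsingleton_or_nontrivial (M →ₗ[A] N) with hMN | hMN
    · have : Subsingleton M := subsingleton_of_moduleCharacter_eq h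
      have : Subsingleton (N →ₗ[A] M) := subsingleton_linearMap_symm
      have : Subsingleton N := subsingleton_of_moduleCharacter_eq h.symm
      exact ⟨0⟩
    · obtain ⟨f, hf⟩ := exists_ne (0 : M →ₗ[A] N)
      obtain ⟨eM⟩ := nonempty_linearEquiv_ker_prod_range f
      obtain ⟨C, hC⟩ := exists_isCompl f.range
      let eN := Submodule.prodEquivOfIsCompl C f.range hC.symm
      have : Module.Finite k f.ker := finite_submodule f.ker
      have : Module.Finite k f.range := finite_submodule f.range
      have : Module.Finite k C := finite_submodule C
      have hlt : Module.finrank k f.ker < d := by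
        rw [← hd]
        exact Submodule.finrank_lt (s := f.ker.restrictScalars k)
          (by simpa [lt_top_iff_ne_top, LinearMap.ker_eq_top] using hf)
      have hcancel : moduleCharacter k A f.ker = moduleCharacter k A C := by
        rw [moduleCharacter_eq_of_linearEquiv eM, ← moduleCharacter_eq_of_linearEquiv eN,
          moduleCharacter_prod, moduleCharacter_prod] at h
        exact add_right_cancel h
      obtain ⟨e⟩ := ih _ hlt hcancel rfl
      exact ⟨eM.trans ((e.prodCongr (LinearEquiv.refl A f.range)).trans eN)⟩

end CharacterDeterminesModule

section Representations

open scoped MonoidAlgebra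

variable {k Γ V W : Type*} [Field k] [Monoid Γ] [AddCommGroup V] [Module k V]
  [AddCommGroup W] [Module k W] {ρ : Representation k Γ V} {σ : Representation k Γ W}

variable (ρ) in
theorem moduleCharacter_asModule_single (γ : Γ) (c : k) :
    moduleCharacter k k[Γ] ρ.asModule (MonoidAlgebra.single γ c) = c * ρ.character γ := by
  have hconj : ρ.asModuleEquiv.conj (Algebra.lsmul k k ρ.asModule (MonoidAlgebra.single γ c)) =
      c • ρ γ := by
    ext v
    rw [LinearEquiv.conj_apply_apply, Algebra.lsmul_coe, Representation.asModuleEquiv_map_smul,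
      Representation.asAlgebraHom_single, LinearEquiv.apply_symm_apply]
  rw [moduleCharacter_apply, ← LinearMap.trace_conj' _ ρ.asModuleEquiv, hconj, map_smul,
    smul_eq_mul, Representation.character]

theorem moduleCharacter_asModule_eq (h : ρ.character = σ.character) :
    moduleCharacter k k[Γ] ρ.asModule = moduleCharacter k k[Γ] σ.asModule := by
  ext γ
  simp [moduleCharacter_asModule_single, h]

theorem nonempty_equiv_of_character_eq [CharZero k] [Module.Finite k V] [Module.Finite k W]
    [IsSemisimpleModule k[Γ] ρ.asModule] [IsSemisimpleModule k[Γ] σ.asModule]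
    (h : ρ.character = σ.character) : Nonempty (ρ.Equiv σ) := by
  obtain ⟨e⟩ := nonempty_linearEquiv_of_moduleCharacter_eq (moduleCharacter_asModule_eq h)
  exact ⟨((Representation.IntertwiningMap.equivLinearMapAsModule ρ σ).symm e).ofBijective
    e.bijective⟩

end Representations

section MatrixRepresentations

open scoped MonoidAlgebra

variable {k Γ ι : Type*} [Monoid Γ] [Fintype ι] [DecidableEq ι]

/-- The representation on `ι → k` given by a homomorphism into the multiplicative monoid of
matrices; for `k = ℂ` and `ι = Fin n` it unfolds to the same term as `matRep`. -/
def matrixRepresentation [CommRing k] (φ : Γ →* Matrix ι ι k) : Representation k Γ (ι → k) :=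
  (Matrix.toLinAlgEquiv' : Matrix ι ι k ≃ₐ[k] _).toAlgHom.toRingHom.toMonoidHom.comp φ

theorem matrixRepresentation_character [Field k] (φ : Γ →* Matrix ι ι k) (γ : Γ) :
    (matrixRepresentation φ).character γ = (φ γ).trace :=
  Matrix.trace_toLin'_eq (φ γ)

theorem exists_isUnit_forall_eq_conj_of_equiv [CommRing k] {φ₁ φ₂ : Γ →* Matrix ι ι k}
    (e : (matrixRepresentation φ₁).Equiv (matrixRepresentation φ₂)) :
    ∃ g : Matrix ι ι k, IsUnit g ∧ ∀ γ, φ₂ γ = g * φ₁ γ * g⁻¹ := by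
  let g := LinearMap.toMatrix' e.toLinearEquiv.toLinearMap
  have hg : IsUnit g := LinearMap.isUnit_toMatrix'_iff.mpr
    ((Module.End.isUnit_iff _).mpr e.toLinearEquiv.bijective)
  refine ⟨g, hg, fun γ => ?_⟩
  have hintertwine : g * φ₁ γ = φ₂ γ * g := by
    apply Matrix.toLin'.injective
    rw [Matrix.toLin'_mul, Matrix.toLin'_mul, Matrix.toLin'_toMatrix']
    exact e.isIntertwining' γ
  rw [hintertwine, Matrix.mul_nonsing_inv_cancel_right _ _ ((Matrix.isUnit_iff_isUnit_det g).mp hg)]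

theorem statement9_general [Field k] [CharZero k] (φ₁ φ₂ : Γ →* Matrix ι ι k)
    (h1 : IsSemisimpleModule k[Γ] (matrixRepresentation φ₁).asModule)
    (h2 : IsSemisimpleModule k[Γ] (matrixRepresentation φ₂).asModule)
    (htrace : ∀ γ, (φ₁ γ).trace = (φ₂ γ).trace) :
    ∃ g : Matrix ι ι k, IsUnit g ∧ ∀ γ, φ₂ γ = g * φ₁ γ * g⁻¹ := by
  have hcharacter : (matrixRepresentation φ₁).character = (matrixRepresentation φ₂).character := by
    ext γ
    rw [matrixRepresentation_character, matrixRepresentation_character, htrace]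
  obtain ⟨e⟩ := nonempty_equiv_of_character_eq hcharacter
  exact exists_isUnit_forall_eq_conj_of_equiv e

end MatrixRepresentations

/-- Pointwise conjugate semisimple representations `Γ → GL_n(ℂ)` are globally conjugate.
Homomorphisms `Γ → GL_n(ℂ)` are encoded as monoid homomorphisms into the multiplicative
monoid of matrices (a monoid homomorphism from a group automatically lands in `GL_n(ℂ)`),
and semisimplicity as semisimplicity of `ℂⁿ` as a module over `ℂ[Γ]`. -/
theorem statement9 (n : ℕ) (Γ : Type) [Group Γ]
    (φ₁ φ₂ : Γ →* Matrix (Fin n) (Fin n) ℂ)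
    (h1 : IsSemisimpleModule (MonoidAlgebra ℂ Γ) (matRep φ₁).asModule)
    (h2 : IsSemisimpleModule (MonoidAlgebra ℂ Γ) (matRep φ₂).asModule)
    (hloc : ∀ γ : Γ, ∃ g : Matrix (Fin n) (Fin n) ℂ, IsUnit g ∧ φ₂ γ = g * φ₁ γ * g⁻¹) :
    ∃ g : Matrix (Fin n) (Fin n) ℂ, IsUnit g ∧ ∀ γ : Γ, φ₂ γ = g * φ₁ γ * g⁻¹ := by
  refine statement9_general φ₁ φ₂ h1 h2 fun γ => ?_
  obtain ⟨g, hg, hconj⟩ := hloc γ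
  rw [hconj, Matrix.trace_conj hg]

end
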